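/- Let Φ be a generalized Horn first-order theory and P a safe normal positive logic program; then ι_EB(Φ,P) ≡ᴱ_oga ι_EH(Φ,P). Let Φ be a Horn first-order theory and P a normal positive logic program; then ι_HP(Φ,P) ≡ᴱ_oga ι_EB(Φ,P) ≡ᴱ_oga ι_EH(Φ,P). -/

import Mathlib

set_option autoImplicit false

/-! # First-order autoepistemic logic (FO-AEL): syntax -/

structure Sig : Type 1 where
  Func : Type
  Pred : Type
  arF : Func → ℕ
  arP : Pred → ℕ

inductive Term (S : Sig) : Type
  | var : ℕ → Term S
  | func : (f : S.Func) → (Fin (S.arF f) → Term S) → Term S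

inductive Formula (S : Sig) : Type
  | atom : (p : S.Pred) → (Fin (S.arP p) → Term S) → Formula S
  | eq : Term S → Term S → Formula S
  | not : Formula S → Formula S
  | and : Formula S → Formula S → Formula S
  | ex : ℕ → Formula S → Formula S
  | box : Formula S → Formula S

namespace Term

variable {S : Sig}

/-- A term is ground if it contains no variables; ground terms are the *names*. -/
def isGround : Term S → Prop
  | var _ => False
  | func _ ts => ∀ i, (ts i).isGround

def hasVar (x : ℕ) : Term S → Prop
  | var y => y = x
  | func _ ts => ∃ i, (ts i).hasVar x

/-- Application of a partial (name) substitution to a term. -/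
def subst (β : ℕ → Option (Term S)) : Term S → Term S
  | var x => (β x).getD (var x)
  | func f ts => func f (fun i => (ts i).subst β)

/-- The function symbols occurring in a term. -/
def funcs : Term S → Set S.Func
  | var _ => ∅
  | func f ts => insert f (⋃ i, (ts i).funcs)

/-- `t` is a name (ground term) over the set `F` of function symbols. -/
def isNameOf (F : Set S.Func) : Term S → Prop
  | var _ => False
  | func f ts => f ∈ F ∧ ∀ i, (ts i).isNameOf F

end Term

namespace Formula

variable {S : Sig}

/-- A formula is objective if it is 𝖫-free. -/
def isObjective : Formula S → Prop
  | atom _ _ => True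
  | eq _ _ => True
  | not φ => φ.isObjective
  | and φ ψ => φ.isObjective ∧ ψ.isObjective
  | ex _ φ => φ.isObjective
  | box _ => False

def isGround : Formula S → Prop
  | atom _ ts => ∀ i, (ts i).isGround
  | eq t₁ t₂ => t₁.isGround ∧ t₂.isGround
  | not φ => φ.isGround
  | and φ ψ => φ.isGround ∧ ψ.isGround
  | ex _ _ => False
  | box φ => φ.isGround

def isAtomic : Formula S → Prop
  | atom _ _ => True
  | eq _ _ => True
  | not _ => False
  | and _ _ => False
  | ex _ _ => False
  | box _ => False

/-- The modal operator 𝖫 occurs only applied to (objective) atomic formulas. -/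
def boxAtomic : Formula S → Prop
  | atom _ _ => True
  | eq _ _ => True
  | not φ => φ.boxAtomic
  | and φ ψ => φ.boxAtomic ∧ ψ.boxAtomic
  | ex _ φ => φ.boxAtomic
  | box φ => φ.isAtomic

/-- Propositional formulas: built from 0-ary predicates only. -/
def isPropositional : Formula S → Prop
  | atom p _ => S.arP p = 0
  | eq _ _ => False
  | not φ => φ.isPropositional
  | and φ ψ => φ.isPropositional ∧ ψ.isPropositional
  | ex _ _ => False
  | box _ => False

def freeIn (x : ℕ) : Formula S → Prop
  | atom _ ts => ∃ i, (ts i).hasVar x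
  | eq t₁ t₂ => t₁.hasVar x ∨ t₂.hasVar x
  | not φ => φ.freeIn x
  | and φ ψ => φ.freeIn x ∨ ψ.freeIn x
  | ex y φ => x ≠ y ∧ φ.freeIn x
  | box φ => φ.freeIn x

/-- A formula is closed (a sentence) if it has no free variables. -/
def closed (φ : Formula S) : Prop := ∀ x, ¬ φ.freeIn x

/-- Capture-avoiding application of a partial name substitution (values are ground). -/
def subst (β : ℕ → Option (Term S)) : Formula S → Formula S
  | atom p ts => atom p (fun i => (ts i).subst β)
  | eq t₁ t₂ => eq (t₁.subst β) (t₂.subst β)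
  | not φ => not (φ.subst β)
  | and φ ψ => and (φ.subst β) (ψ.subst β)
  | ex y φ => ex y (φ.subst (fun z => if z = y then none else β z))
  | box φ => box (φ.subst β)

def funcs : Formula S → Set S.Func
  | atom _ ts => ⋃ i, (ts i).funcs
  | eq t₁ t₂ => t₁.funcs ∪ t₂.funcs
  | not φ => φ.funcs
  | and φ ψ => φ.funcs ∪ ψ.funcs
  | ex _ φ => φ.funcs
  | box φ => φ.funcs

def preds : Formula S → Set S.Pred
  | atom p _ => {p}
  | eq _ _ => ∅
  | not φ => φ.preds
  | and φ ψ => φ.preds ∪ ψ.preds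
  | ex _ φ => φ.preds
  | box φ => φ.preds

/-- `φ ∨ ψ` as an abbreviation: `¬(¬φ ∧ ¬ψ)`. -/
def or (φ ψ : Formula S) : Formula S := not (and (not φ) (not ψ))

/-- `φ ⊃ ψ` as an abbreviation: `¬(φ ∧ ¬ψ)`. -/
def imp (φ ψ : Formula S) : Formula S := not (and φ (not ψ))

/-- `∀x.φ` as an abbreviation: `¬∃x.¬φ`. -/
def all (x : ℕ) (φ : Formula S) : Formula S := not (ex x (not φ))

end Formula

/-! ## Semantics -/

structure Interp (S : Sig) where
  U : Type
  nonempty : Nonempty U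
  interpF : (f : S.Func) → (Fin (S.arF f) → U) → U
  interpP : (p : S.Pred) → (Fin (S.arP p) → U) → Prop

noncomputable def Interp.dflt {S : Sig} (w : Interp S) : w.U := Classical.choice w.nonempty

def Term.eval {S : Sig} (w : Interp S) (B : ℕ → w.U) : Term S → w.U
  | Term.var x => B x
  | Term.func f ts => w.interpF f (fun i => (ts i).eval w B)

/-- Evaluation of a ground term (the assignment is irrelevant). -/
noncomputable def Term.evalG {S : Sig} (w : Interp S) (t : Term S) : w.U :=
  t.eval w (fun _ => w.dflt)

/-- An individual is named if some name (ground term) denotes it. -/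
def IsNamed {S : Sig} (w : Interp S) (k : w.U) : Prop :=
  ∃ t : Term S, t.isGround ∧ Term.evalG w t = k

/-- A name substitution `β` is associated with the variable assignment `B`:
its domain is exactly the set of variables whose `B`-value is named, and
it assigns to each such variable a name denoting its `B`-value. -/
def Assoc {S : Sig} (w : Interp S) (B : ℕ → w.U) (β : ℕ → Option (Term S)) : Prop :=
  ∀ x : ℕ,
    (IsNamed w (B x) → (β x).isSome) ∧
    (∀ t : Term S, β x = some t → t.isGround ∧ Term.evalG w t = B x)

/-- The two semantics: any-name (E) and all-name (A). -/
inductive Sem : Type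
  | any
  | all

/-- Satisfaction of a formula in an autoepistemic interpretation `⟨w,Γ⟩`
under a variable assignment, for the any-name (E) resp. all-name (A) semantics. -/
def Sat {S : Sig} (X : Sem) (w : Interp S) (Γ : Set (Formula S)) :
    Formula S → (ℕ → w.U) → Prop
  | Formula.atom p ts, B => w.interpP p (fun i => (ts i).eval w B)
  | Formula.eq t₁ t₂, B => t₁.eval w B = t₂.eval w B
  | Formula.not φ, B => ¬ Sat X w Γ φ B
  | Formula.and φ ψ, B => Sat X w Γ φ B ∧ Sat X w Γ ψ B
  | Formula.ex x φ, B => ∃ u : w.U, Sat X w Γ φ (Function.update B x u)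
  | Formula.box φ, B =>
      match X with
      | Sem.any => ∃ β, Assoc w B β ∧ (φ.subst β).closed ∧ φ.subst β ∈ Γ
      | Sem.all => ∀ β, Assoc w B β → (φ.subst β).closed ∧ φ.subst β ∈ Γ

def ModelsF {S : Sig} (X : Sem) (w : Interp S) (Γ : Set (Formula S)) (φ : Formula S) : Prop :=
  ∀ B : ℕ → w.U, Sat X w Γ φ B

def ModelsT {S : Sig} (X : Sem) (w : Interp S) (Γ Φ : Set (Formula S)) : Prop :=
  ∀ φ ∈ Φ, ModelsF X w Γ φ

/-- `Φ ⊨ˣ_Γ φ`. -/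
def Entails {S : Sig} (X : Sem) (Φ Γ : Set (Formula S)) (φ : Formula S) : Prop :=
  ∀ w : Interp S, ModelsT X w Γ Φ → ModelsF X w Γ φ

/-- The standard names assumption: all names are interpreted distinctly
and every individual is named. -/
def SNA {S : Sig} (w : Interp S) : Prop :=
  (∀ t₁ t₂ : Term S, t₁.isGround → t₂.isGround → Term.evalG w t₁ = Term.evalG w t₂ → t₁ = t₂) ∧
  (∀ k : w.U, IsNamed w k)

/-- Entailment restricted to interpretations satisfying the standard names assumption. -/
def EntailsSN {S : Sig} (X : Sem) (Φ Γ : Set (Formula S)) (φ : Formula S) : Prop :=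
  ∀ w : Interp S, SNA w → ModelsT X w Γ Φ → ModelsF X w Γ φ

/-- `T` is a stableˣ expansion of `Φ`. -/
def StableExp {S : Sig} (X : Sem) (Φ T : Set (Formula S)) : Prop :=
  T = {φ | Entails X Φ T φ}

def objOf {S : Sig} (T : Set (Formula S)) : Set (Formula S) :=
  {φ ∈ T | φ.isObjective}

def ogOf {S : Sig} (T : Set (Formula S)) : Set (Formula S) :=
  {φ ∈ T | φ.isObjective ∧ φ.isGround}

def ogaOf {S : Sig} (T : Set (Formula S)) : Set (Formula S) :=
  {φ ∈ T | φ.isObjective ∧ φ.isGround ∧ φ.isAtomic}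

def Consistent {S : Sig} (T : Set (Formula S)) : Prop := T ≠ Set.univ

/-- `Φ₁ ≡ˣ Φ₂`: same stableˣ expansions. -/
def ExpEquiv {S : Sig} (X : Sem) (Φ₁ Φ₂ : Set (Formula S)) : Prop :=
  ∀ T, StableExp X Φ₁ T ↔ StableExp X Φ₂ T

/-- `Φ₁ ≡ˣ_γ Φ₂` for a selector `sel` (e.g. `ogaOf`): the stableˣ expansions
correspond with respect to `sel`. -/
def ExpEquivSel {S : Sig} (X : Sem) (sel : Set (Formula S) → Set (Formula S))
    (Φ₁ Φ₂ : Set (Formula S)) : Prop :=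
  (∀ T, StableExp X Φ₁ T → ∃ T', StableExp X Φ₂ T' ∧ sel T = sel T') ∧
  (∀ T', StableExp X Φ₂ T' → ∃ T, StableExp X Φ₁ T ∧ sel T = sel T')

/-- Autoepistemicˣ consequences of `Φ`. -/
def Cn {S : Sig} (X : Sem) (Φ : Set (Formula S)) : Set (Formula S) :=
  {φ | ∀ T, StableExp X Φ T → φ ∈ T}

def CnO {S : Sig} (X : Sem) (Φ : Set (Formula S)) : Set (Formula S) :=
  {φ ∈ Cn X Φ | φ.isObjective}

def CnOg {S : Sig} (X : Sem) (Φ : Set (Formula S)) : Set (Formula S) :=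
  {φ ∈ Cn X Φ | φ.isObjective ∧ φ.isGround}

/-! ## Logic programs -/

structure PAtom (S : Sig) where
  p : S.Pred
  args : Fin (S.arP p) → Term S

namespace PAtom

variable {S : Sig}

def toFormula (a : PAtom S) : Formula S := Formula.atom a.p a.args

def isGround (a : PAtom S) : Prop := ∀ i, (a.args i).isGround

def hasVar (x : ℕ) (a : PAtom S) : Prop := ∃ i, (a.args i).hasVar x

def substA (σ : ℕ → Term S) (a : PAtom S) : PAtom S :=
  ⟨a.p, fun i => (a.args i).subst (fun x => some (σ x))⟩

def funcs (a : PAtom S) : Set S.Func := ⋃ i, (a.args i).funcs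

end PAtom

/-- A (disjunctive) rule `h₁ | … | h_l ← b₁,…,b_m, not c₁,…,not c_n`,
together with a list of the variables occurring in it. -/
structure Rule (S : Sig) where
  head : List (PAtom S)
  pos : List (PAtom S)
  neg : List (PAtom S)
  vars : List ℕ

namespace Rule

variable {S : Sig}

def atoms (r : Rule S) : List (PAtom S) := r.head ++ r.pos ++ r.neg

def hasVar (x : ℕ) (r : Rule S) : Prop := ∃ a ∈ r.atoms, PAtom.hasVar x a

/-- Well-formedness: at least one head atom, and `vars` lists all variables of the rule. -/
def wf (r : Rule S) : Prop := r.head ≠ [] ∧ ∀ x, r.hasVar x → x ∈ r.vars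

def isNormal (r : Rule S) : Prop := r.head.length = 1

def isGround (r : Rule S) : Prop := (∀ a ∈ r.atoms, a.isGround) ∧ r.vars = []

def isSafe (r : Rule S) : Prop := ∀ x, r.hasVar x → ∃ a ∈ r.pos, PAtom.hasVar x a

def isPositive (r : Rule S) : Prop := r.neg = []

def applySubst (σ : ℕ → Term S) (r : Rule S) : Rule S :=
  ⟨r.head.map (PAtom.substA σ), r.pos.map (PAtom.substA σ), r.neg.map (PAtom.substA σ), []⟩

end Rule

abbrev Program (S : Sig) := Set (Rule S)

def progWf {S : Sig} (P : Program S) : Prop := ∀ r ∈ P, r.wf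
def progNormal {S : Sig} (P : Program S) : Prop := ∀ r ∈ P, r.isNormal
def progGround {S : Sig} (P : Program S) : Prop := ∀ r ∈ P, r.isGround
def progSafe {S : Sig} (P : Program S) : Prop := ∀ r ∈ P, r.isSafe
def progPositive {S : Sig} (P : Program S) : Prop := ∀ r ∈ P, r.isPositive

/-- The function symbols occurring in `P` (part of the signature `Σ_P`). -/
def progFuncs {S : Sig} (P : Program S) : Set S.Func :=
  {f | ∃ r ∈ P, ∃ a ∈ r.atoms, f ∈ a.funcs}

/-- The predicate symbols occurring in `P` (part of the signature `Σ_P`). -/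
def progPreds {S : Sig} (P : Program S) : Set S.Pred :=
  {q | ∃ r ∈ P, ∃ a ∈ r.atoms, a.p = q}

/-- The ambient signature is exactly the signature `Σ_P` of `P`. -/
def fullSig {S : Sig} (P : Program S) : Prop :=
  (∀ f : S.Func, f ∈ progFuncs P) ∧ (∀ q : S.Pred, q ∈ progPreds P)

/-- Standing assumption: `Σ_P` contains a 0-ary function symbol whenever it
has a predicate symbol of arity greater than 0. -/
def goodSig {S : Sig} (P : Program S) : Prop :=
  (∃ q ∈ progPreds P, 0 < S.arP q) → ∃ f ∈ progFuncs P, S.arF f = 0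

/-! ## Embeddings of logic programs into FO-AEL -/

def andAll {S : Sig} : Formula S → List (Formula S) → Formula S
  | φ, [] => φ
  | φ, ψ :: rest => andAll (Formula.and φ ψ) rest

def orAll {S : Sig} : Formula S → List (Formula S) → Formula S
  | φ, [] => φ
  | φ, ψ :: rest => orAll (Formula.or φ ψ) rest

/-- `impOf ants c` is `⋀ ants ⊃ c` (just `c` if there are no antecedents). -/
def impOf {S : Sig} : List (Formula S) → Formula S → Formula S
  | [], c => c
  | a :: rest, c => Formula.imp (andAll a rest) c

/-- Disjunction of a nonempty list (junk value on the empty list,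
which is excluded by rule well-formedness). -/
def disjOf {S : Sig} : List (Formula S) → Formula S
  | [] => Formula.eq (Term.var 0) (Term.var 0)
  | h :: rest => orAll h rest

/-- Universal uclosure over the listed variables. -/
def uclosure {S : Sig} (vs : List ℕ) (φ : Formula S) : Formula S :=
  vs.foldr Formula.all φ

def bodyHP {S : Sig} (r : Rule S) : List (Formula S) :=
  r.pos.map PAtom.toFormula ++ r.neg.map (fun c => Formula.not (Formula.box c.toFormula))

def bodyE {S : Sig} (r : Rule S) : List (Formula S) :=
  r.pos.map (fun b => Formula.and b.toFormula (Formula.box b.toFormula)) ++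
    r.neg.map (fun c => Formula.not (Formula.box c.toFormula))

/-- `τ_HP(r)` resp. `τ^∨_HP(r)`. -/
def embHP {S : Sig} (r : Rule S) : Formula S :=
  uclosure r.vars (impOf (bodyHP r) (disjOf (r.head.map PAtom.toFormula)))

/-- `τ_EB(r)` resp. `τ^∨_EB(r)`. -/
def embEB {S : Sig} (r : Rule S) : Formula S :=
  uclosure r.vars (impOf (bodyE r) (disjOf (r.head.map PAtom.toFormula)))

/-- `τ_EH(r)` resp. `τ^∨_EH(r)`. -/
def embEH {S : Sig} (r : Rule S) : Formula S :=
  uclosure r.vars (impOf (bodyE r)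
    (disjOf (r.head.map (fun h => Formula.and h.toFormula (Formula.box h.toFormula)))))

/-- The unique-names axioms `¬𝖫(t₁=t₂) ⊃ t₁≠t₂` for distinct names of `Σ_P`. -/
def UNAax {S : Sig} (P : Program S) : Set (Formula S) :=
  {φ | ∃ t₁ t₂ : Term S, t₁.isNameOf (progFuncs P) ∧ t₂.isNameOf (progFuncs P) ∧ t₁ ≠ t₂ ∧
        φ = Formula.imp (Formula.not (Formula.box (Formula.eq t₁ t₂)))
              (Formula.not (Formula.eq t₁ t₂))}

/-- The positive introspection axioms `α ⊃ 𝖫α` for objective ground atoms of `Σ_P`. -/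
def PIAax {S : Sig} (P : Program S) : Set (Formula S) :=
  {φ | ∃ a : PAtom S, a.p ∈ progPreds P ∧ (∀ i, (a.args i).isNameOf (progFuncs P)) ∧
        φ = Formula.imp a.toFormula (Formula.box a.toFormula)}

def ruleEmb {S : Sig} (emb : Rule S → Formula S) (P : Program S) : Set (Formula S) :=
  {φ | ∃ r ∈ P, φ = emb r}

def tauHP {S : Sig} (P : Program S) : Set (Formula S) := ruleEmb embHP P ∪ UNAax P
def tauEB {S : Sig} (P : Program S) : Set (Formula S) := ruleEmb embEB P ∪ UNAax P
def tauEH {S : Sig} (P : Program S) : Set (Formula S) := ruleEmb embEH P ∪ UNAax P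
def tauHPv {S : Sig} (P : Program S) : Set (Formula S) := ruleEmb embHP P ∪ PIAax P ∪ UNAax P
def tauEBv {S : Sig} (P : Program S) : Set (Formula S) := ruleEmb embEB P ∪ PIAax P ∪ UNAax P
def tauEHv {S : Sig} (P : Program S) : Set (Formula S) := ruleEmb embEH P ∪ UNAax P
def tauHPminus {S : Sig} (P : Program S) : Set (Formula S) := ruleEmb embHP P
def tauEHvminus {S : Sig} (P : Program S) : Set (Formula S) := ruleEmb embEH P

/-! ## Grounding and stable models -/

/-- The grounding of `P`: all ground instantiations of rules of `P`
obtained by replacing variables with names of `Σ_P`. -/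
def grP {S : Sig} (P : Program S) : Program S :=
  {r' | ∃ r ∈ P, ∃ σ : ℕ → Term S,
        (∀ x, r.hasVar x → (σ x).isNameOf (progFuncs P)) ∧ r' = Rule.applySubst σ r}

/-- A Herbrand interpretation: a set of ground atomic formulas. -/
def HerbrandI {S : Sig} (M : Set (Formula S)) : Prop :=
  ∀ φ ∈ M, φ.isAtomic ∧ φ.isGround

/-- `M` is a Herbrand model of the positive ground program `Q` (relative to the
names of `Σ_P`): rules are satisfied and `t = t ∈ M` for every name `t`. -/
def HerbrandModelOf {S : Sig} (P Q : Program S) (M : Set (Formula S)) : Prop :=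
  HerbrandI M ∧
  (∀ r ∈ Q, (∀ b ∈ r.pos, PAtom.toFormula b ∈ M) → ∃ h ∈ r.head, PAtom.toFormula h ∈ M) ∧
  (∀ t : Term S, t.isNameOf (progFuncs P) → Formula.eq t t ∈ M)

/-- The Gelfond–Lifschitz reduct of `gr(P)` with respect to `M`. -/
def reduct {S : Sig} (P : Program S) (M : Set (Formula S)) : Program S :=
  {r' | ∃ r ∈ grP P, (∀ c ∈ r.neg, PAtom.toFormula c ∉ M) ∧
        r' = ⟨r.head, r.pos, [], r.vars⟩}

/-- `M` is a stable model of `P`: a minimal Herbrand model of the reduct of `gr(P)` w.r.t. `M`. -/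
def isStableModel {S : Sig} (P : Program S) (M : Set (Formula S)) : Prop :=
  HerbrandModelOf P (reduct P M) M ∧
  ∀ M', M' ⊆ M → HerbrandModelOf P (reduct P M) M' → M' = M

/-! ## First-order theories and classes thereof -/

/-- An FO theory: a set of objective sentences. -/
def FOTheory {S : Sig} (Φ : Set (Formula S)) : Prop :=
  ∀ φ ∈ Φ, φ.isObjective ∧ φ.closed

def theoryFuncs {S : Sig} (Φ : Set (Formula S)) : Set S.Func := {f | ∃ φ ∈ Φ, f ∈ φ.funcs}
def theoryPreds {S : Sig} (Φ : Set (Formula S)) : Set S.Pred := {q | ∃ φ ∈ Φ, q ∈ φ.preds}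

/-- The ambient signature is exactly the union of the signatures of `Φ` and `P`. -/
def CoverSig {S : Sig} (Φ : Set (Formula S)) (P : Program S) : Prop :=
  (∀ f : S.Func, f ∈ theoryFuncs Φ ∪ progFuncs P) ∧
  (∀ q : S.Pred, q ∈ theoryPreds Φ ∪ progPreds P)

def exClosure {S : Sig} (ys : List ℕ) (φ : Formula S) : Formula S := ys.foldr Formula.ex φ

/-- A Horn sentence `(∀)(b₁ ∧ … ∧ b_n ⊃ h)` with atomic `b_i`, `h`
(the consequent `h` may be absent). -/
def isHornSentence {S : Sig} (φ : Formula S) : Prop :=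
  ∃ (vs : List ℕ) (bs : List (Formula S)),
    (∀ b ∈ bs, b.isAtomic) ∧
    ((∃ h : Formula S, h.isAtomic ∧ φ = uclosure vs (impOf bs h)) ∨
     (∃ b rest, bs = b :: rest ∧ φ = uclosure vs (Formula.not (andAll b rest))))

def HornTheory {S : Sig} (Φ : Set (Formula S)) : Prop :=
  FOTheory Φ ∧ ∀ φ ∈ Φ, isHornSentence φ

/-- A generalized Horn sentence `(∀)(b₁ ∧ … ∧ b_n ⊃ ∃ȳ.h)` with atomic `b_i`, `h`,
the variables `ȳ` occurring only in `h` (the consequent may be absent). -/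
def isGHornSentence {S : Sig} (φ : Formula S) : Prop :=
  ∃ (vs : List ℕ) (bs : List (Formula S)),
    (∀ b ∈ bs, b.isAtomic) ∧
    ((∃ (ys : List ℕ) (h : Formula S), h.isAtomic ∧
        (∀ y ∈ ys, ∀ b ∈ bs, ¬ b.freeIn y) ∧
        φ = uclosure vs (impOf bs (exClosure ys h))) ∨
     (∃ b rest, bs = b :: rest ∧ φ = uclosure vs (Formula.not (andAll b rest))))

def GHornTheory {S : Sig} (Φ : Set (Formula S)) : Prop :=
  FOTheory Φ ∧ ∀ φ ∈ Φ, isGHornSentence φ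

def PropTheory {S : Sig} (Φ : Set (Formula S)) : Prop :=
  FOTheory Φ ∧ ∀ φ ∈ Φ, φ.isPropositional

/-!
Relative to a fixed set `Γ` of believed ground atoms, the question is which ground atoms hold in all
models. Horn sentences, the unique-names axioms and the `EB`-embedding of a positive normal rule are
all preserved by products of models: an atom holds in a product iff it holds in every factor, and
`𝖫φ` passes from a product to its factors, because a name of an individual of the product also names
its components. Multiplying a given `EB`-model by one countermodel for each ground atom outside `Γ`
yields an `EB`-model whose true ground atoms are all believed. In such a model an atom with named
arguments is true only if it is believed, so the extra `𝖫`-requirements of `EH` are met when the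
rules are safe. If `Φ` is Horn without existential quantifiers, one may moreover restrict the
product to its named individuals, and there `HP`, `EB` and `EH` coincide. Hence all embeddings
entail the same ground atoms. Finally, stable expansions of theories in which `𝖫` is applied to
atomic formulas only are determined by, and exist for, the fixed points of ground-atom entailment.
-/

/-! ### Substitution and free variables -/

namespace Term

variable {S : Sig} {w : Interp S} {B B' : ℕ → w.U} {β β' : ℕ → Option (Term S)}

theorem isGround_iff_forall_not_hasVar (t : Term S) : t.isGround ↔ ∀ x, ¬ t.hasVar x := by
  induction t with
  | var y => simp [isGround, hasVar]
  | func f ts ih =>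
    simp only [isGround, hasVar, ih, not_exists]
    exact forall_comm

theorem isNameOf.isGround {F : Set S.Func} {t : Term S} (h : t.isNameOf F) : t.isGround := by
  induction t with
  | var y => exact h
  | func f ts ih => exact fun i => ih i (h.2 i)

theorem subst_congr {t : Term S} (h : ∀ x, t.hasVar x → β x = β' x) : t.subst β = t.subst β' := by
  induction t with
  | var y => simp only [subst, h y rfl]
  | func f ts ih => exact congrArg (func f) (funext fun i => ih i fun x hx => h x ⟨i, hx⟩)

theorem subst_eq_self {t : Term S} (h : ∀ x, t.hasVar x → β x = none) : t.subst β = t := by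
  induction t with
  | var y => simp only [subst, h y rfl, Option.getD_none]
  | func f ts ih => exact congrArg (func f) (funext fun i => ih i fun x hx => h x ⟨i, hx⟩)

theorem hasVar_subst (hβ : ∀ x t, β x = some t → t.isGround) (t : Term S) (x : ℕ) :
    (t.subst β).hasVar x ↔ t.hasVar x ∧ β x = none := by
  induction t with
  | var y =>
    cases hy : β y with
    | none =>
      simp only [subst, hy, Option.getD_none, hasVar]
      exact ⟨fun h => ⟨h, h ▸ hy⟩, And.left⟩
    | some t =>
      have ht := (isGround_iff_forall_not_hasVar t).1 (hβ y t hy) x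
      simp only [subst, hy, Option.getD_some, hasVar, ht, false_iff, not_and]
      rintro rfl
      simp [hy]
  | func f ts ih => simp only [subst, hasVar, ih, exists_and_right]

theorem eval_congr {t : Term S} (h : ∀ x, t.hasVar x → B x = B' x) : t.eval w B = t.eval w B' := by
  induction t with
  | var y => exact h y rfl
  | func f ts ih => exact congrArg (w.interpF f) (funext fun i => ih i fun x hx => h x ⟨i, hx⟩)

theorem eval_eq_evalG {t : Term S} (h : t.isGround) (B : ℕ → w.U) : t.eval w B = t.evalG w :=
  eval_congr fun x hx => absurd hx ((isGround_iff_forall_not_hasVar t).1 h x)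

theorem eval_subst (hβ : ∀ x t, β x = some t → t.eval w B = B x) (t : Term S) :
    (t.subst β).eval w B = t.eval w B := by
  induction t with
  | var y =>
    cases hy : β y with
    | none => simp only [subst, hy, Option.getD_none]
    | some t =>
      simp only [subst, hy, Option.getD_some]
      exact hβ y t hy
  | func f ts ih => simp only [subst, eval, ih]

end Term

namespace Formula

variable {S : Sig} {β β' : ℕ → Option (Term S)} {φ : Formula S}

theorem subst_congr (h : ∀ x, φ.freeIn x → β x = β' x) : φ.subst β = φ.subst β' := by
  induction φ generalizing β β' with
  | atom p ts =>
    exact congrArg (atom p) (funext fun i => Term.subst_congr fun x hx => h x ⟨i, hx⟩)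
  | eq t₁ t₂ =>
    exact congrArg₂ eq (Term.subst_congr fun x hx => h x (.inl hx))
      (Term.subst_congr fun x hx => h x (.inr hx))
  | not φ ih => exact congrArg not (ih h)
  | and φ ψ ihφ ihψ =>
    exact congrArg₂ and (ihφ fun x hx => h x (.inl hx)) (ihψ fun x hx => h x (.inr hx))
  | ex y φ ih =>
    refine congrArg (ex y) (ih fun x hx => ?_)
    by_cases hxy : x = y
    · simp only [hxy, if_true]
    · simp only [hxy, if_false, h x ⟨hxy, hx⟩]
  | box φ ih => exact congrArg box (ih h)

theorem subst_eq_self (h : ∀ x, φ.freeIn x → β x = none) : φ.subst β = φ := by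
  induction φ generalizing β with
  | atom p ts =>
    exact congrArg (atom p) (funext fun i => Term.subst_eq_self fun x hx => h x ⟨i, hx⟩)
  | eq t₁ t₂ =>
    exact congrArg₂ eq (Term.subst_eq_self fun x hx => h x (.inl hx))
      (Term.subst_eq_self fun x hx => h x (.inr hx))
  | not φ ih => exact congrArg not (ih h)
  | and φ ψ ihφ ihψ =>
    exact congrArg₂ and (ihφ fun x hx => h x (.inl hx)) (ihψ fun x hx => h x (.inr hx))
  | ex y φ ih =>
    refine congrArg (ex y) (ih fun x hx => ?_)
    by_cases hxy : x = y
    · simp only [hxy, if_true]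
    · simp only [hxy, if_false, h x ⟨hxy, hx⟩]
  | box φ ih => exact congrArg box (ih h)

theorem freeIn_subst (hβ : ∀ x t, β x = some t → t.isGround) (x : ℕ) :
    (φ.subst β).freeIn x ↔ φ.freeIn x ∧ β x = none := by
  induction φ generalizing β with
  | atom p ts => simp only [subst, freeIn, Term.hasVar_subst hβ, exists_and_right]
  | eq t₁ t₂ => simp only [subst, freeIn, Term.hasVar_subst hβ, or_and_right]
  | not _ ih => exact ih hβ
  | and φ ψ ihφ ihψ => simp only [subst, freeIn, ihφ hβ, ihψ hβ, or_and_right]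
  | ex y φ ih =>
    have hβy : ∀ z t, (if z = y then none else β z) = some t → t.isGround := fun z t ht =>
      hβ z t (Option.ite_none_left_eq_some.1 ht).2
    simp only [subst, freeIn, ih hβy, and_assoc]
    exact and_congr_right fun hxy => by rw [if_neg hxy]
  | box _ ih => exact ih hβ

theorem closed_subst_iff (hβ : ∀ x t, β x = some t → t.isGround) :
    (φ.subst β).closed ↔ ∀ x, φ.freeIn x → (β x).isSome := by
  simp only [closed, freeIn_subst hβ, not_and, ← Option.isSome_iff_ne_none]

theorem isAtomic.isObjective (h : φ.isAtomic) : φ.isObjective := by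
  cases φ <;> trivial

theorem isAtomic.subst (h : φ.isAtomic) (β : ℕ → Option (Term S)) : (φ.subst β).isAtomic := by
  cases φ <;> exact h

theorem isAtomic.closed_iff_isGround (h : φ.isAtomic) : φ.closed ↔ φ.isGround := by
  cases φ with
  | atom p ts =>
    simp only [closed, freeIn, isGround, Term.isGround_iff_forall_not_hasVar, not_exists]
    exact forall_comm
  | eq t₁ t₂ =>
    simp only [closed, freeIn, isGround, Term.isGround_iff_forall_not_hasVar, not_or, forall_and]
  | _ => exact h.elim

/-- The ground atoms (equations included): the objective ground atoms selected by `ogaOf`. -/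
def IsGroundAtom (φ : Formula S) : Prop := φ.isAtomic ∧ φ.isGround

end Formula

theorem mem_ogaOf_iff {S : Sig} {T : Set (Formula S)} {φ : Formula S} :
    φ ∈ ogaOf T ↔ φ ∈ T ∧ φ.IsGroundAtom :=
  and_congr_right fun _ =>
    ⟨fun ⟨_, hground, hatomic⟩ => ⟨hatomic, hground⟩,
      fun ⟨hatomic, hground⟩ => ⟨hatomic.isObjective, hground, hatomic⟩⟩

/-! ### Satisfaction -/

section Satisfaction

variable {S : Sig} {X : Sem} {w : Interp S} {Γ : Set (Formula S)} {B : ℕ → w.U}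
  {φ ψ : Formula S}

theorem sat_and : Sat X w Γ (φ.and ψ) B ↔ Sat X w Γ φ B ∧ Sat X w Γ ψ B :=
  Iff.rfl

theorem sat_imp : Sat X w Γ (φ.imp ψ) B ↔ (Sat X w Γ φ B → Sat X w Γ ψ B) :=
  not_and_not_right

theorem sat_or : Sat X w Γ (φ.or ψ) B ↔ Sat X w Γ φ B ∨ Sat X w Γ ψ B :=
  or_iff_not_and_not.symm

theorem sat_all {x : ℕ} :
    Sat X w Γ (φ.all x) B ↔ ∀ u, Sat X w Γ φ (Function.update B x u) :=
  not_exists_not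

theorem sat_andAll {φs : List (Formula S)} :
    Sat X w Γ (andAll φ φs) B ↔ ∀ ψ ∈ φ :: φs, Sat X w Γ ψ B := by
  induction φs generalizing φ with
  | nil => simp only [andAll, List.forall_mem_singleton]
  | cons ψ φs ih => simp only [andAll, ih, List.forall_mem_cons, sat_and, and_assoc]

theorem sat_orAll {φs : List (Formula S)} :
    Sat X w Γ (orAll φ φs) B ↔ ∃ ψ ∈ φ :: φs, Sat X w Γ ψ B := by
  induction φs generalizing φ with
  | nil => simp only [orAll, List.mem_singleton, exists_eq_left]
  | cons ψ φs ih => simp only [orAll, ih, List.exists_mem_cons_iff, sat_or, or_assoc]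

theorem sat_disjOf {φs : List (Formula S)} (h : φs ≠ []) :
    Sat X w Γ (disjOf φs) B ↔ ∃ ψ ∈ φs, Sat X w Γ ψ B := by
  cases φs with
  | nil => exact absurd rfl h
  | cons φ φs => exact sat_orAll

theorem sat_impOf {φs : List (Formula S)} :
    Sat X w Γ (impOf φs ψ) B ↔ ((∀ φ ∈ φs, Sat X w Γ φ B) → Sat X w Γ ψ B) := by
  cases φs with
  | nil => simp [impOf]
  | cons φ φs => rw [impOf, sat_imp, sat_andAll]

theorem modelsF_uclosure {xs : List ℕ} : ModelsF X w Γ (uclosure xs φ) ↔ ModelsF X w Γ φ := by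
  induction xs with
  | nil => rfl
  | cons x xs ih =>
    rw [← ih]
    refine ⟨fun h B => ?_, fun h B => sat_all.2 fun u => h _⟩
    have hB := sat_all.1 (h B) (B x)
    rwa [Function.update_eq_self] at hB

theorem modelsF_uclosure_impOf {xs : List ℕ} {φs : List (Formula S)} :
    ModelsF X w Γ (uclosure xs (impOf φs ψ)) ↔
      ∀ B, (∀ φ ∈ φs, Sat X w Γ φ B) → Sat X w Γ ψ B :=
  modelsF_uclosure.trans (forall_congr' fun _ => sat_impOf)

theorem exists_assoc_extending {β : ℕ → Option (Term S)}
    (hβ : ∀ x t, β x = some t → t.isGround ∧ t.evalG w = B x) :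
    ∃ β', Assoc w B β' ∧ ∀ x t, β x = some t → β' x = some t := by
  classical
  refine ⟨fun x => (β x).or (if h : IsNamed w (B x) then some h.choose else none),
    fun x => ⟨fun h => ?_, fun t ht => ?_⟩, fun x t ht => by simp only [ht, Option.some_or]⟩
  · simp only [h, dite_true, Option.isSome_or, Option.isSome_some, Bool.or_true]
  · rcases Option.or_eq_some_iff.1 ht with hx | ⟨-, hx⟩
    · exact hβ x t hx
    · obtain ⟨h, hsome⟩ := Option.dite_none_right_eq_some.1 hx
      exact Option.some.inj hsome ▸ h.choose_spec

theorem exists_assoc (B : ℕ → w.U) : ∃ β, Assoc w B β :=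
  (exists_assoc_extending (β := fun _ => none) nofun).imp fun _ => And.left

theorem sat_box_iff_mem (h : φ.closed) : Sat X w Γ φ.box B ↔ φ ∈ Γ := by
  have hsubst (β) : φ.subst β = φ := Formula.subst_eq_self fun x hx => absurd hx (h x)
  obtain ⟨β, hβ⟩ := exists_assoc B
  cases X <;> simp only [Sat, hsubst, h, true_and]
  · exact ⟨fun ⟨_, _, hφ⟩ => hφ, fun hφ => ⟨β, hβ, hφ⟩⟩
  · exact ⟨fun hφ => hφ β hβ, fun hφ _ _ => hφ⟩

theorem isNamed_of_sat_box (h : Sat Sem.any w Γ φ.box B) {x : ℕ} (hx : φ.freeIn x) :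
    IsNamed w (B x) := by
  obtain ⟨β, hβ, hclosed, -⟩ := h
  have hsome := (Formula.closed_subst_iff fun y t ht => ((hβ y).2 t ht).1).1 hclosed x hx
  obtain ⟨t, ht⟩ := Option.isSome_iff_exists.1 hsome
  exact ⟨t, (hβ x).2 t ht⟩

/-- The positive diagram of `w`: the ground atoms true in `w`. Neither the semantics, nor the
belief set, nor the assignment used in the definition matters, see
`Formula.IsGroundAtom.sat_iff_mem_posDiagram`. -/
def Interp.posDiagram (w : Interp S) : Set (Formula S) :=
  {φ | φ.IsGroundAtom ∧ Sat Sem.any w ∅ φ fun _ => w.dflt}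

theorem Formula.IsGroundAtom.sat_iff_mem_posDiagram (h : φ.IsGroundAtom) :
    Sat X w Γ φ B ↔ φ ∈ w.posDiagram := by
  refine Iff.trans ?_ (and_iff_right h).symm
  obtain ⟨hatomic, hground⟩ := h
  cases φ with
  | atom p ts => simp only [Sat, Term.eval_eq_evalG (hground _)]
  | eq t₁ t₂ => simp only [Sat, Term.eval_eq_evalG hground.1, Term.eval_eq_evalG hground.2]
  | _ => exact hatomic.elim

theorem Formula.IsGroundAtom.modelsF_iff_mem_posDiagram (h : φ.IsGroundAtom) :
    ModelsF X w Γ φ ↔ φ ∈ w.posDiagram :=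
  ⟨fun hφ => h.sat_iff_mem_posDiagram.1 (hφ fun _ => w.dflt),
    fun hφ _ => h.sat_iff_mem_posDiagram.2 hφ⟩

theorem Formula.isAtomic.sat_subst (h : φ.isAtomic) {β : ℕ → Option (Term S)}
    (hβ : Assoc w B β) : Sat X w Γ (φ.subst β) B ↔ Sat X w Γ φ B := by
  have heval (t : Term S) : (t.subst β).eval w B = t.eval w B :=
    Term.eval_subst (fun x t ht =>
      (Term.eval_eq_evalG ((hβ x).2 t ht).1 B).trans ((hβ x).2 t ht).2) t
  cases φ with
  | atom p ts => simp only [Formula.subst, Sat, heval]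
  | eq t₁ t₂ => simp only [Formula.subst, Sat, heval]
  | _ => exact h.elim

theorem Formula.isAtomic.sat_box (h : φ.isAtomic) (hΓ : w.posDiagram ⊆ Γ)
    (hnamed : ∀ x, φ.freeIn x → IsNamed w (B x)) (hφ : Sat Sem.any w Γ φ B) :
    Sat Sem.any w Γ φ.box B := by
  obtain ⟨β, hβ⟩ := exists_assoc B
  have hclosed : (φ.subst β).closed :=
    (Formula.closed_subst_iff fun x t ht => ((hβ x).2 t ht).1).2 fun x hx =>
      (hβ x).1 (hnamed x hx)
  have hatom : (φ.subst β).IsGroundAtom :=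
    ⟨h.subst β, (h.subst β).closed_iff_isGround.1 hclosed⟩
  exact ⟨β, hβ, hclosed, hΓ (hatom.sat_iff_mem_posDiagram.1 ((h.sat_subst hβ).2 hφ))⟩

end Satisfaction

/-! ### Stable expansions as fixed points on ground atoms -/

namespace Formula

variable {S : Sig} {φ : Formula S}

/-- The arguments of the outermost occurrences of `𝖫` in a formula: satisfaction of the formula
depends on the belief set only through instances of these. -/
def boxArgs : Formula S → Set (Formula S)
  | atom _ _ => ∅
  | eq _ _ => ∅
  | not φ => φ.boxArgs
  | and φ ψ => φ.boxArgs ∪ ψ.boxArgs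
  | ex _ φ => φ.boxArgs
  | box φ => {φ}

/-- The nesting depth of `𝖫`. -/
def modalDepth : Formula S → ℕ
  | atom _ _ => 0
  | eq _ _ => 0
  | not φ => φ.modalDepth
  | and φ ψ => max φ.modalDepth ψ.modalDepth
  | ex _ φ => φ.modalDepth
  | box φ => φ.modalDepth + 1

theorem boxAtomic_iff : φ.boxAtomic ↔ ∀ ψ ∈ φ.boxArgs, ψ.isAtomic := by
  induction φ with
  | atom p ts => simp [boxAtomic, boxArgs]
  | eq t₁ t₂ => simp [boxAtomic, boxArgs]
  | not _ ih => exact ih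
  | and φ ψ ihφ ihψ => simp only [boxAtomic, boxArgs, Set.mem_union, or_imp, forall_and, ihφ, ihψ]
  | ex _ _ ih => exact ih
  | box φ _ => simp only [boxAtomic, boxArgs, Set.mem_singleton_iff, forall_eq]

theorem isObjective.boxAtomic (h : φ.isObjective) : φ.boxAtomic := by
  induction φ with
  | atom p ts => trivial
  | eq t₁ t₂ => trivial
  | not φ ih => exact ih h
  | and φ ψ ihφ ihψ => exact ⟨ihφ h.1, ihψ h.2⟩
  | ex x φ ih => exact ih h
  | box φ _ => exact h.elim

theorem modalDepth_subst (φ : Formula S) (β : ℕ → Option (Term S)) :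
    (φ.subst β).modalDepth = φ.modalDepth := by
  induction φ generalizing β with
  | atom p ts => rfl
  | eq t₁ t₂ => rfl
  | not _ ih => exact ih β
  | and φ ψ ihφ ihψ => exact congrArg₂ max (ihφ β) (ihψ β)
  | ex x _ ih => exact ih _
  | box φ ih => exact congrArg (· + 1) (ih β)

theorem modalDepth_lt_of_mem_boxArgs {ψ : Formula S} (h : ψ ∈ φ.boxArgs) :
    ψ.modalDepth < φ.modalDepth := by
  induction φ with
  | atom p ts => exact h.elim
  | eq t₁ t₂ => exact h.elim
  | not φ ih => exact ih h
  | and φ₁ φ₂ ih₁ ih₂ => exact lt_max_iff.2 (h.imp ih₁ ih₂)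
  | ex x φ ih => exact ih h
  | box φ _ => exact h ▸ Nat.lt_succ_self _

end Formula

section StableExpansions

variable {S : Sig} {X : Sem} {Γ Γ' Ψ Ψ₀ : Set (Formula S)}

theorem sat_congr {w : Interp S} {φ : Formula S}
    (h : ∀ ψ ∈ φ.boxArgs, ∀ β, (ψ.subst β).closed → (ψ.subst β ∈ Γ ↔ ψ.subst β ∈ Γ'))
    (B : ℕ → w.U) : Sat X w Γ φ B ↔ Sat X w Γ' φ B := by
  induction φ generalizing B with
  | atom p ts => rfl
  | eq t₁ t₂ => rfl
  | not φ ih => exact not_congr (ih h B)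
  | and φ ψ ihφ ihψ =>
    exact and_congr (ihφ (fun χ hχ => h χ (.inl hχ)) B) (ihψ (fun χ hχ => h χ (.inr hχ)) B)
  | ex x φ ih => exact exists_congr fun u => ih h _
  | box φ ih =>
    have hφ (β) := and_congr_right (h φ rfl β)
    cases X <;> simp only [Sat, hφ]

theorem modelsT_ogaOf_iff (hΨ : ∀ φ ∈ Ψ, φ.boxAtomic) {w : Interp S} :
    ModelsT X w (ogaOf Γ) Ψ ↔ ModelsT X w Γ Ψ := by
  refine forall₂_congr fun φ hφ => forall_congr' fun B => sat_congr (fun ψ hψ β hclosed => ?_) B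
  have hatomic := (Formula.boxAtomic_iff.1 (hΨ φ hφ) ψ hψ).subst β
  exact mem_ogaOf_iff.trans (and_iff_left ⟨hatomic, hatomic.closed_iff_isGround.1 hclosed⟩)

/-- The formulas satisfied, relative to the belief set `Γ`, by all interpretations in `C`. For `C`
the class of models of `Φ` relative to `Γ`, these are the consequences `{φ | Φ ⊨_Γ φ}`. -/
def commonTheory (X : Sem) (C : Set (Interp S)) (Γ : Set (Formula S)) : Set (Formula S) :=
  {φ | ∀ w ∈ C, ModelsF X w Γ φ}

theorem mem_commonTheory_congr {C : Set (Interp S)} {φ : Formula S}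
    (h : ∀ ψ : Formula S, ψ.modalDepth < φ.modalDepth → (ψ ∈ Γ ↔ ψ ∈ Γ')) :
    φ ∈ commonTheory X C Γ ↔ φ ∈ commonTheory X C Γ' :=
  forall₂_congr fun _ _ => forall_congr' <| sat_congr fun ψ hψ β _ =>
    h _ ((ψ.modalDepth_subst β).trans_lt (Formula.modalDepth_lt_of_mem_boxArgs hψ))

theorem mem_iterate_commonTheory_iff {C : Set (Interp S)} {φ : Formula S} {m n : ℕ}
    (hm : φ.modalDepth < m) (hn : φ.modalDepth < n) :
    φ ∈ (commonTheory X C)^[m] ∅ ↔ φ ∈ (commonTheory X C)^[n] ∅ := by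
  induction m generalizing φ n with
  | zero => exact absurd hm (Nat.not_lt_zero _)
  | succ m ih =>
    obtain ⟨n, rfl⟩ := Nat.exists_eq_add_one_of_ne_zero (Nat.ne_zero_of_lt hn)
    simp only [Function.iterate_succ_apply']
    exact mem_commonTheory_congr fun ψ hψ => ih (by omega) (by omega)

-- Membership of a formula stabilises in the iterates as soon as their number exceeds its depth.
theorem exists_commonTheory_eq_self (X : Sem) (C : Set (Interp S)) :
    ∃ T, commonTheory X C T = T := by
  refine ⟨{φ | φ ∈ (commonTheory X C)^[φ.modalDepth + 1] ∅}, Set.ext fun φ => ?_⟩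
  rw [Set.mem_ofPred_eq, Function.iterate_succ_apply']
  exact mem_commonTheory_congr fun ψ hψ => mem_iterate_commonTheory_iff (Nat.lt_succ_self _) hψ

/-- The ground atoms true in all models of `Ψ` relative to `Γ`. -/
def groundAtomCn (X : Sem) (Ψ Γ : Set (Formula S)) : Set (Formula S) :=
  {φ | φ.IsGroundAtom ∧ ∀ w, ModelsT X w Γ Ψ → φ ∈ w.posDiagram}

theorem ogaOf_commonTheory (T : Set (Formula S)) :
    ogaOf (commonTheory X {w | ModelsT X w Γ Ψ} T) = groundAtomCn X Ψ Γ :=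
  Set.ext fun _ => mem_ogaOf_iff.trans <| and_comm.trans <| and_congr_right fun hφ =>
    forall₂_congr fun _ _ => hφ.modelsF_iff_mem_posDiagram

theorem exists_stableExp_ogaOf_eq_iff (hΨ : ∀ φ ∈ Ψ, φ.boxAtomic) :
    (∃ T, StableExp X Ψ T ∧ ogaOf T = Γ) ↔ groundAtomCn X Ψ Γ = Γ := by
  have hmodels (T : Set (Formula S)) :
      {w | ModelsT X w (ogaOf T) Ψ} = {w | ModelsT X w T Ψ} :=
    Set.ext fun w => modelsT_ogaOf_iff hΨ
  constructor
  · rintro ⟨T, hT, rfl⟩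
    rw [← ogaOf_commonTheory T, hmodels]
    exact congrArg ogaOf hT.symm
  · intro hΓ
    obtain ⟨T, hT⟩ := exists_commonTheory_eq_self X {w | ModelsT X w Γ Ψ}
    have hoga : ogaOf T = Γ := by rw [← hT, ogaOf_commonTheory, hΓ]
    refine ⟨T, ?_, hoga⟩
    rw [← hoga, hmodels] at hT
    exact hT.symm

theorem ExpEquivSel.symm {sel : Set (Formula S) → Set (Formula S)} (h : ExpEquivSel X sel Ψ₀ Ψ) :
    ExpEquivSel X sel Ψ Ψ₀ :=
  ⟨fun T hT => (h.2 T hT).imp fun _ => And.imp_right Eq.symm,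
    fun T hT => (h.1 T hT).imp fun _ => And.imp_right Eq.symm⟩

theorem ExpEquivSel.trans {sel : Set (Formula S) → Set (Formula S)} {Ψ₁ Ψ₂ Ψ₃ : Set (Formula S)}
    (h₁₂ : ExpEquivSel X sel Ψ₁ Ψ₂) (h₂₃ : ExpEquivSel X sel Ψ₂ Ψ₃) :
    ExpEquivSel X sel Ψ₁ Ψ₃ := by
  refine ⟨fun T₁ hT₁ => ?_, fun T₃ hT₃ => ?_⟩
  · obtain ⟨T₂, hT₂, h₁⟩ := h₁₂.1 T₁ hT₁
    obtain ⟨T₃, hT₃, h₂⟩ := h₂₃.1 T₂ hT₂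
    exact ⟨T₃, hT₃, h₁.trans h₂⟩
  · obtain ⟨T₂, hT₂, h₂⟩ := h₂₃.2 T₃ hT₃
    obtain ⟨T₁, hT₁, h₁⟩ := h₁₂.2 T₂ hT₂
    exact ⟨T₁, hT₁, h₁.trans h₂⟩

theorem expEquivSel_ogaOf_of_groundAtomCn (hΨ₀ : ∀ φ ∈ Ψ₀, φ.boxAtomic)
    (hΨ : ∀ φ ∈ Ψ, φ.boxAtomic)
    (h : ∀ Γ, groundAtomCn X Ψ₀ Γ = Γ ↔ groundAtomCn X Ψ Γ = Γ) :
    ExpEquivSel X ogaOf Ψ₀ Ψ := by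
  refine ⟨fun T hT => ?_, fun T hT => ?_⟩
  · have hfix := (exists_stableExp_ogaOf_eq_iff hΨ₀).1 ⟨T, hT, rfl⟩
    exact ((exists_stableExp_ogaOf_eq_iff hΨ).2 ((h _).1 hfix)).imp fun _ => And.imp_right Eq.symm
  · have hfix := (exists_stableExp_ogaOf_eq_iff hΨ).1 ⟨T, hT, rfl⟩
    exact (exists_stableExp_ogaOf_eq_iff hΨ₀).2 ((h _).2 hfix)

/-- Every small nonempty family of models of `Ψ₀` relative to `Γ` whose common ground atoms are all
believed admits a model of `Ψ` relative to `Γ` in which only common ground atoms are true. Products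
of models provide instances. -/
def HasCommonModels (X : Sem) (Γ Ψ₀ Ψ : Set (Formula S)) : Prop :=
  ∀ (I : Type) [Nonempty I] (w : I → Interp S), (∀ i, ModelsT X (w i) Γ Ψ₀) →
    ⋂ i, (w i).posDiagram ⊆ Γ → ∃ W, ModelsT X W Γ Ψ ∧ W.posDiagram ⊆ ⋂ i, (w i).posDiagram

-- The family consists of `w` and one countermodel for each ground atom that is not believed.
theorem HasCommonModels.exists_posDiagram_subset (h : HasCommonModels X Γ Ψ₀ Ψ)
    (hΓ : groundAtomCn X Ψ₀ Γ ⊆ Γ) {w : Interp S} (hw : ModelsT X w Γ Ψ₀) :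
    ∃ W, ModelsT X W Γ Ψ ∧ W.posDiagram ⊆ w.posDiagram := by
  have hcounter (φ : {φ : Formula S // φ.IsGroundAtom ∧ φ ∉ Γ}) :
      ∃ v, ModelsT X v Γ Ψ₀ ∧ φ.1 ∉ v.posDiagram := by
    by_contra! hall
    exact φ.2.2 (hΓ ⟨φ.2.1, hall⟩)
  choose v hv hφv using hcounter
  obtain ⟨W, hW, hWsub⟩ := h _ (fun o => o.elim w v) (Option.rec hw hv) fun φ hφ => by
    rw [Set.mem_iInter] at hφ
    by_contra hφΓ
    exact hφv ⟨φ, (hφ none).1, hφΓ⟩ (hφ (some _))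
  exact ⟨W, hW, hWsub.trans (Set.iInter_subset _ none)⟩

theorem HasCommonModels.groundAtomCn_eq (h : HasCommonModels X Γ Ψ₀ Ψ)
    (hmono : ∀ w, ModelsT X w Γ Ψ → ModelsT X w Γ Ψ₀) (hΓ : groundAtomCn X Ψ₀ Γ ⊆ Γ) :
    groundAtomCn X Ψ₀ Γ = groundAtomCn X Ψ Γ := by
  refine Set.Subset.antisymm (fun φ hφ => ⟨hφ.1, fun w hw => hφ.2 w (hmono w hw)⟩)
    fun φ hφ => ⟨hφ.1, fun w hw => ?_⟩
  obtain ⟨W, hW, hWw⟩ := h.exists_posDiagram_subset hΓ hw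
  exact hWw (hφ.2 W hW)

theorem expEquivSel_ogaOf_of_hasCommonModels (hΨ₀ : ∀ φ ∈ Ψ₀, φ.boxAtomic)
    (hΨ : ∀ φ ∈ Ψ, φ.boxAtomic) (hmono : ∀ Γ w, ModelsT X w Γ Ψ → ModelsT X w Γ Ψ₀)
    (h : ∀ Γ, HasCommonModels X Γ Ψ₀ Ψ) : ExpEquivSel X ogaOf Ψ₀ Ψ := by
  refine expEquivSel_ogaOf_of_groundAtomCn hΨ₀ hΨ fun Γ => ⟨fun hΓ => ?_, fun hΓ => ?_⟩
  · exact ((h Γ).groundAtomCn_eq (hmono Γ) hΓ.subset).symm.trans hΓ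
  · have hsub : groundAtomCn X Ψ₀ Γ ⊆ Γ := fun φ hφ =>
      hΓ.subset ⟨hφ.1, fun w hw => hφ.2 w (hmono Γ w hw)⟩
    exact ((h Γ).groundAtomCn_eq (hmono Γ) hsub).trans hΓ

end StableExpansions

/-! ### Products and preservation -/

section Preservation

variable {S : Sig} {I : Type*} {X : Sem} {Γ : Set (Formula S)} {W : Interp S} {w : I → Interp S}
  {π : ∀ i, W.U → (w i).U} {φ ψ : Formula S}

/-- The maps `π` identify `W` with a substructure of the product of the `w i`. -/
structure IsSubproduct (W : Interp S) (w : I → Interp S) (π : ∀ i, W.U → (w i).U) : Prop where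
  map_interpF : ∀ i f us, π i (W.interpF f us) = (w i).interpF f fun j => π i (us j)
  interpP_iff : ∀ p us, W.interpP p us ↔ ∀ i, (w i).interpP p fun j => π i (us j)
  injective : Function.Injective fun u i => π i u

/-- Satisfaction of `φ` passes from `W` to all `w i` along the maps `π i`. -/
def ProjectsAlong (X : Sem) (Γ : Set (Formula S)) (π : ∀ i, W.U → (w i).U) (φ : Formula S) :
    Prop :=
  ∀ B : ℕ → W.U, Sat X W Γ φ B → ∀ i, Sat X (w i) Γ φ (π i ∘ B)

/-- Joint satisfaction of `φ` in all `w i` is inherited by `W` along the maps `π i`. -/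
def LiftsAlong (X : Sem) (Γ : Set (Formula S)) (π : ∀ i, W.U → (w i).U) (φ : Formula S) : Prop :=
  ∀ B : ℕ → W.U, (∀ i, Sat X (w i) Γ φ (π i ∘ B)) → Sat X W Γ φ B

theorem modelsT_of_liftsAlong {Φ : Set (Formula S)} (hΦ : ∀ φ ∈ Φ, LiftsAlong X Γ π φ)
    (hw : ∀ i, ModelsT X (w i) Γ Φ) : ModelsT X W Γ Φ :=
  fun φ hφ B => hΦ φ hφ B fun i => hw i φ hφ _

namespace ProjectsAlong

theorem and (hφ : ProjectsAlong X Γ π φ) (hψ : ProjectsAlong X Γ π ψ) :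
    ProjectsAlong X Γ π (φ.and ψ) :=
  fun B hB i => ⟨hφ B hB.1 i, hψ B hB.2 i⟩

theorem andAll {φs : List (Formula S)} (h : ∀ ψ ∈ φ :: φs, ProjectsAlong X Γ π ψ) :
    ProjectsAlong X Γ π (andAll φ φs) :=
  fun B hB i => sat_andAll.2 fun ψ hψ => h ψ hψ B (sat_andAll.1 hB ψ hψ) i

theorem liftsAlong_not [Nonempty I] (h : ProjectsAlong X Γ π φ) : LiftsAlong X Γ π φ.not :=
  fun B hB hφ => hB (Classical.arbitrary I) (h B hφ _)

end ProjectsAlong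

namespace LiftsAlong

theorem imp (hφ : ProjectsAlong X Γ π φ) (hψ : LiftsAlong X Γ π ψ) :
    LiftsAlong X Γ π (φ.imp ψ) :=
  fun B hB => sat_imp.2 fun hBφ => hψ B fun i => sat_imp.1 (hB i) (hφ B hBφ i)

theorem impOf {φs : List (Formula S)} (hφs : ∀ φ ∈ φs, ProjectsAlong X Γ π φ)
    (hψ : LiftsAlong X Γ π ψ) : LiftsAlong X Γ π (impOf φs ψ) := by
  cases φs with
  | nil => exact hψ
  | cons φ φs => exact imp (.andAll hφs) hψ

theorem uclosure (h : LiftsAlong X Γ π φ) (xs : List ℕ) : LiftsAlong X Γ π (uclosure xs φ) := by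
  induction xs with
  | nil => exact h
  | cons x xs ih =>
    refine fun B hB => sat_all.2 fun u => ih _ fun i => ?_
    rw [Function.comp_update]
    exact sat_all.1 (hB i) _

theorem exClosure (hπ : Function.Surjective fun u i => π i u) (h : LiftsAlong X Γ π φ)
    (ys : List ℕ) : LiftsAlong X Γ π (exClosure ys φ) := by
  induction ys with
  | nil => exact h
  | cons y ys ih =>
    intro B hB
    choose v hv using hB
    obtain ⟨u, rfl⟩ := hπ v
    refine ⟨u, ih _ fun i => ?_⟩
    rw [Function.comp_update]
    exact hv i

end LiftsAlong

namespace IsSubproduct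

theorem map_eval (H : IsSubproduct W w π) (i : I) (B : ℕ → W.U) (t : Term S) :
    π i (t.eval W B) = t.eval (w i) (π i ∘ B) := by
  induction t with
  | var y => rfl
  | func f ts ih => simp only [Term.eval, H.map_interpF, ih]

theorem map_evalG (H : IsSubproduct W w π) (i : I) {t : Term S} (ht : t.isGround) :
    π i (t.evalG W) = t.evalG (w i) :=
  (H.map_eval i _ t).trans (Term.eval_eq_evalG ht _)

theorem sat_iff_of_isAtomic (H : IsSubproduct W w π) (hφ : φ.isAtomic) (B : ℕ → W.U) :
    Sat X W Γ φ B ↔ ∀ i, Sat X (w i) Γ φ (π i ∘ B) := by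
  cases φ with
  | atom p ts => simp only [Sat, H.interpP_iff, H.map_eval]
  | eq t₁ t₂ => simp only [Sat, ← H.map_eval, ← H.injective.eq_iff, funext_iff]
  | _ => exact hφ.elim

theorem projectsAlong_of_isAtomic (H : IsSubproduct W w π) (hφ : φ.isAtomic) :
    ProjectsAlong X Γ π φ :=
  fun B => (H.sat_iff_of_isAtomic hφ B).1

theorem liftsAlong_of_isAtomic (H : IsSubproduct W w π) (hφ : φ.isAtomic) :
    LiftsAlong X Γ π φ :=
  fun B => (H.sat_iff_of_isAtomic hφ B).2

theorem posDiagram_subset (H : IsSubproduct W w π) :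
    W.posDiagram ⊆ ⋂ i, (w i).posDiagram :=
  fun _ hφ => Set.mem_iInter.2 fun i =>
    hφ.1.sat_iff_mem_posDiagram.1 (H.projectsAlong_of_isAtomic hφ.1.1 _ hφ.2 i)

-- A name of `u` in `W` is a name of `π i u` in `w i`, so an associated name substitution for `W`
-- extends to one for `w i`.
theorem projectsAlong_box (H : IsSubproduct W w π) (φ : Formula S) :
    ProjectsAlong Sem.any Γ π φ.box := by
  rintro B ⟨β, hβ, hclosed, hmem⟩ i
  obtain ⟨β', hβ', hext⟩ := exists_assoc_extending (w := w i) (B := π i ∘ B) (β := β)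
    fun x t ht => by
      obtain ⟨hground, heval⟩ := (hβ x).2 t ht
      exact ⟨hground, by rw [← H.map_evalG i hground, heval, Function.comp_apply]⟩
  have hsubst : φ.subst β = φ.subst β' := Formula.subst_congr fun x hx => by
    have hsome := (Formula.closed_subst_iff fun y t ht => ((hβ y).2 t ht).1).1 hclosed x hx
    obtain ⟨t, ht⟩ := Option.isSome_iff_exists.1 hsome
    rw [ht, hext x t ht]
  exact ⟨β', hβ', hsubst ▸ hclosed, hsubst ▸ hmem⟩

theorem liftsAlong_of_isGHornSentence [Nonempty I] (H : IsSubproduct W w π)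
    (hπ : Function.Surjective fun u i => π i u) (hφ : isGHornSentence φ) :
    LiftsAlong X Γ π φ := by
  obtain ⟨xs, bs, hbs, ⟨ys, h, hh, -, rfl⟩ | ⟨b, bs, rfl, rfl⟩⟩ := hφ
  · exact .uclosure (.impOf (fun b hb => H.projectsAlong_of_isAtomic (hbs b hb))
      (.exClosure hπ (H.liftsAlong_of_isAtomic hh) ys)) xs
  · exact .uclosure (ProjectsAlong.andAll fun c hc =>
      H.projectsAlong_of_isAtomic (hbs c hc)).liftsAlong_not xs

theorem liftsAlong_of_isHornSentence [Nonempty I] (H : IsSubproduct W w π)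
    (hφ : isHornSentence φ) : LiftsAlong X Γ π φ := by
  obtain ⟨xs, bs, hbs, ⟨h, hh, rfl⟩ | ⟨b, bs, rfl, rfl⟩⟩ := hφ
  · exact .uclosure (.impOf (fun b hb => H.projectsAlong_of_isAtomic (hbs b hb))
      (H.liftsAlong_of_isAtomic hh)) xs
  · exact .uclosure (ProjectsAlong.andAll fun c hc =>
      H.projectsAlong_of_isAtomic (hbs c hc)).liftsAlong_not xs

theorem liftsAlong_of_mem_UNAax [Nonempty I] (H : IsSubproduct W w π) {P : Program S}
    (hφ : φ ∈ UNAax P) : LiftsAlong X Γ π φ := by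
  obtain ⟨t₁, t₂, h₁, h₂, -, rfl⟩ := hφ
  have hatomic : (Formula.eq t₁ t₂).isAtomic := trivial
  have hclosed : (Formula.eq t₁ t₂).closed :=
    hatomic.closed_iff_isGround.2 ⟨h₁.isGround, h₂.isGround⟩
  refine .imp (fun B hB i hi => hB ?_) (H.projectsAlong_of_isAtomic hatomic).liftsAlong_not
  exact (sat_box_iff_mem hclosed).2 ((sat_box_iff_mem hclosed).1 hi)

theorem liftsAlong_embEB (H : IsSubproduct W w π) {r : Rule S} (hnormal : r.isNormal)
    (hpos : r.isPositive) : LiftsAlong Sem.any Γ π (embEB r) := by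
  obtain ⟨h, hhead⟩ := List.length_eq_one_iff.1 hnormal
  have hbody : ∀ φ ∈ bodyE r, ProjectsAlong Sem.any Γ π φ := by
    intro φ hφ
    rw [bodyE, hpos, List.map_nil, List.append_nil, List.mem_map] at hφ
    obtain ⟨b, -, rfl⟩ := hφ
    exact .and (H.projectsAlong_of_isAtomic trivial) (H.projectsAlong_box _)
  rw [embEB, hhead]
  exact .uclosure (.impOf hbody (H.liftsAlong_of_isAtomic (φ := h.toFormula) trivial)) _

theorem modelsT_union_tauEB [Nonempty I] (H : IsSubproduct W w π) {Φ : Set (Formula S)}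
    {P : Program S} (hΦ : ∀ φ ∈ Φ, LiftsAlong Sem.any Γ π φ) (hN : progNormal P)
    (hpos : progPositive P) (hw : ∀ i, ModelsT Sem.any (w i) Γ (Φ ∪ tauEB P)) :
    ModelsT Sem.any W Γ (Φ ∪ tauEB P) := by
  refine modelsT_of_liftsAlong (π := π) ?_ hw
  rintro φ (hφ | ⟨r, hr, rfl⟩ | hφ)
  · exact hΦ φ hφ
  · exact H.liftsAlong_embEB (hN r hr) (hpos r hr)
  · exact H.liftsAlong_of_mem_UNAax hφ

end IsSubproduct

end Preservation

namespace Interp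

variable {S : Sig}

/-- The direct product of a family of interpretations. -/
noncomputable def pi {I : Type} (w : I → Interp S) : Interp S where
  U := ∀ i, (w i).U
  nonempty := ⟨fun i => (w i).dflt⟩
  interpF f us i := (w i).interpF f fun j => us j i
  interpP p us := ∀ i, (w i).interpP p fun j => us j i

theorem isSubproduct_pi {I : Type} (w : I → Interp S) : IsSubproduct (pi w) w fun i u => u i where
  map_interpF _ _ _ := rfl
  interpP_iff _ _ := Iff.rfl
  injective := Function.injective_id

theorem isNamed_interpF {w : Interp S} {f : S.Func} {us : Fin (S.arF f) → w.U}
    (h : ∀ j, IsNamed w (us j)) : IsNamed w (w.interpF f us) := by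
  choose ts hground heval using h
  exact ⟨Term.func f ts, hground, congrArg (w.interpF f) (funext heval)⟩

/-- The substructure formed by the named individuals, which is nonempty once there is a ground
term. Restricting a product to it names all individuals while preserving Horn sentences. -/
def namedPart (w : Interp S) (h : ∃ t : Term S, t.isGround) : Interp S where
  U := {u : w.U // IsNamed w u}
  nonempty := h.elim fun t ht => ⟨⟨t.evalG w, t, ht, rfl⟩⟩
  interpF f us := ⟨w.interpF f fun j => (us j).1, isNamed_interpF fun j => (us j).2⟩
  interpP p us := w.interpP p fun j => (us j).1

theorem isSubproduct_namedPart_pi {I : Type} (w : I → Interp S) (h : ∃ t : Term S, t.isGround) :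
    IsSubproduct ((pi w).namedPart h) w fun i u => u.1 i where
  map_interpF _ _ _ := rfl
  interpP_iff _ _ := Iff.rfl
  injective := Subtype.val_injective

theorem isNamed_namedPart (w : Interp S) (h : ∃ t : Term S, t.isGround) (u : (w.namedPart h).U) :
    IsNamed (w.namedPart h) u := by
  have heval (B) (t : Term S) : (t.eval (w.namedPart h) B).1 = t.eval w fun x => (B x).1 := by
    induction t with
    | var y => rfl
    | func f ts ih => exact congrArg (w.interpF f) (funext ih)
  obtain ⟨u, t, ht, rfl⟩ := u
  exact ⟨t, ht, Subtype.ext ((heval _ t).trans (Term.eval_eq_evalG ht _))⟩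

end Interp

/-! ### The embeddings of logic programs -/

section BoxAtomic

variable {S : Sig} {φ : Formula S} {φs : List (Formula S)}

theorem boxAtomic_uclosure (h : φ.boxAtomic) (xs : List ℕ) : (uclosure xs φ).boxAtomic := by
  induction xs with
  | nil => exact h
  | cons _ _ ih => exact ih

theorem boxAtomic_andAll (h : φ.boxAtomic) (hs : ∀ ψ ∈ φs, ψ.boxAtomic) :
    (andAll φ φs).boxAtomic := by
  induction φs generalizing φ with
  | nil => exact h
  | cons ψ φs ih =>
    rw [List.forall_mem_cons] at hs
    exact ih ⟨h, hs.1⟩ hs.2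

theorem boxAtomic_orAll (h : φ.boxAtomic) (hs : ∀ ψ ∈ φs, ψ.boxAtomic) :
    (orAll φ φs).boxAtomic := by
  induction φs generalizing φ with
  | nil => exact h
  | cons ψ φs ih =>
    rw [List.forall_mem_cons] at hs
    exact ih ⟨h, hs.1⟩ hs.2

theorem boxAtomic_disjOf (hs : ∀ ψ ∈ φs, ψ.boxAtomic) : (disjOf φs).boxAtomic := by
  cases φs with
  | nil => trivial
  | cons φ φs =>
    rw [List.forall_mem_cons] at hs
    exact boxAtomic_orAll hs.1 hs.2

theorem boxAtomic_impOf (hs : ∀ ψ ∈ φs, ψ.boxAtomic) (h : φ.boxAtomic) :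
    (impOf φs φ).boxAtomic := by
  cases φs with
  | nil => exact h
  | cons ψ φs =>
    rw [List.forall_mem_cons] at hs
    exact ⟨boxAtomic_andAll hs.1 hs.2, h⟩

theorem boxAtomic_of_mem_bodyHP {r : Rule S} (hφ : φ ∈ bodyHP r) : φ.boxAtomic := by
  rcases List.mem_append.1 hφ with hφ | hφ <;> obtain ⟨a, -, rfl⟩ := List.mem_map.1 hφ <;> trivial

theorem boxAtomic_of_mem_bodyE {r : Rule S} (hφ : φ ∈ bodyE r) : φ.boxAtomic := by
  rcases List.mem_append.1 hφ with hφ | hφ <;> obtain ⟨a, -, rfl⟩ := List.mem_map.1 hφ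
  · exact ⟨trivial, trivial⟩
  · trivial

theorem boxAtomic_embHP (r : Rule S) : (embHP r).boxAtomic := by
  refine boxAtomic_uclosure (boxAtomic_impOf (fun _ => boxAtomic_of_mem_bodyHP)
    (boxAtomic_disjOf ?_)) _
  exact List.forall_mem_map.2 fun _ _ => trivial

theorem boxAtomic_embEB (r : Rule S) : (embEB r).boxAtomic := by
  refine boxAtomic_uclosure (boxAtomic_impOf (fun _ => boxAtomic_of_mem_bodyE)
    (boxAtomic_disjOf ?_)) _
  exact List.forall_mem_map.2 fun _ _ => trivial

theorem boxAtomic_embEH (r : Rule S) : (embEH r).boxAtomic := by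
  refine boxAtomic_uclosure (boxAtomic_impOf (fun _ => boxAtomic_of_mem_bodyE)
    (boxAtomic_disjOf ?_)) _
  exact List.forall_mem_map.2 fun _ _ => ⟨trivial, trivial⟩

theorem FOTheory.boxAtomic_union {Φ : Set (Formula S)} (hΦ : FOTheory Φ) {P : Program S}
    {emb : Rule S → Formula S} (hemb : ∀ r, (emb r).boxAtomic) :
    ∀ φ ∈ Φ ∪ (ruleEmb emb P ∪ UNAax P), φ.boxAtomic := by
  rintro φ (hφ | ⟨r, -, rfl⟩ | ⟨t₁, t₂, -, -, -, rfl⟩)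
  · exact (hΦ φ hφ).1.boxAtomic
  · exact hemb r
  · exact ⟨trivial, trivial⟩

end BoxAtomic

section Embeddings

variable {S : Sig} {X : Sem} {w : Interp S} {Γ Φ : Set (Formula S)} {r : Rule S} {P : Program S}

theorem modelsT_union_ruleEmb_mono {emb emb' : Rule S → Formula S} {Ψ : Set (Formula S)}
    (h : ModelsT X w Γ (Φ ∪ (ruleEmb emb P ∪ Ψ)))
    (hemb : ∀ r ∈ P, ModelsF X w Γ (emb r) → ModelsF X w Γ (emb' r)) :
    ModelsT X w Γ (Φ ∪ (ruleEmb emb' P ∪ Ψ)) := by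
  rintro φ (hφ | ⟨r, hr, rfl⟩ | hφ)
  · exact h φ (.inl hφ)
  · exact hemb r hr (h _ (.inr (.inl ⟨r, hr, rfl⟩)))
  · exact h φ (.inr (.inr hφ))

theorem sat_bodyE_iff {B : ℕ → w.U} : (∀ φ ∈ bodyE r, Sat X w Γ φ B) ↔
    (∀ φ ∈ bodyHP r, Sat X w Γ φ B) ∧ ∀ b ∈ r.pos, Sat X w Γ b.toFormula.box B := by
  simp only [bodyE, bodyHP, List.forall_mem_append, List.forall_mem_map, sat_and, forall_and]
  tauto

theorem modelsF_embEB_of_embHP (h : ModelsF X w Γ (embHP r)) : ModelsF X w Γ (embEB r) :=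
  modelsF_uclosure_impOf.2 fun B hB => modelsF_uclosure_impOf.1 h B (sat_bodyE_iff.1 hB).1

theorem modelsF_embEB_iff (hhead : r.head ≠ []) : ModelsF X w Γ (embEB r) ↔
    ∀ B, (∀ φ ∈ bodyE r, Sat X w Γ φ B) → ∃ h ∈ r.head, Sat X w Γ h.toFormula B := by
  simp only [embEB, modelsF_uclosure_impOf, sat_disjOf (mt List.map_eq_nil_iff.1 hhead),
    List.mem_map, exists_exists_and_eq_and]

theorem modelsF_embEH_iff (hhead : r.head ≠ []) : ModelsF X w Γ (embEH r) ↔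
    ∀ B, (∀ φ ∈ bodyE r, Sat X w Γ φ B) →
      ∃ h ∈ r.head, Sat X w Γ h.toFormula B ∧ Sat X w Γ h.toFormula.box B := by
  simp only [embEH, modelsF_uclosure_impOf, sat_disjOf (mt List.map_eq_nil_iff.1 hhead),
    List.mem_map, exists_exists_and_eq_and, sat_and]

theorem modelsF_embEB_of_embEH (hhead : r.head ≠ []) (h : ModelsF X w Γ (embEH r)) :
    ModelsF X w Γ (embEB r) :=
  (modelsF_embEB_iff hhead).2 fun B hB =>
    ((modelsF_embEH_iff hhead).1 h B hB).imp fun _ => And.imp_right And.left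

theorem modelsF_embHP_of_embEB (hΓ : w.posDiagram ⊆ Γ)
    (hnamed : ∀ x, r.hasVar x → ∀ u : w.U, IsNamed w u) (h : ModelsF Sem.any w Γ (embEB r)) :
    ModelsF Sem.any w Γ (embHP r) := by
  refine modelsF_uclosure_impOf.2 fun B hB => modelsF_uclosure_impOf.1 h B
    (sat_bodyE_iff.2 ⟨hB, fun b hb => ?_⟩)
  have hbody : Sat Sem.any w Γ b.toFormula B :=
    hB _ (List.mem_append_left _ (List.mem_map_of_mem hb))
  have hatom : b ∈ r.atoms := List.mem_append_left _ (List.mem_append_right _ hb)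
  exact Formula.isAtomic.sat_box trivial hΓ (fun x hx => hnamed x ⟨b, hatom, hx⟩ _) hbody

theorem modelsF_embEH_of_embEB (hhead : r.head ≠ []) (hΓ : w.posDiagram ⊆ Γ)
    (hnamed : ∀ B, (∀ b ∈ r.pos, Sat Sem.any w Γ b.toFormula.box B) →
      ∀ x, r.hasVar x → IsNamed w (B x))
    (h : ModelsF Sem.any w Γ (embEB r)) : ModelsF Sem.any w Γ (embEH r) := by
  refine (modelsF_embEH_iff hhead).2 fun B hB => ?_
  obtain ⟨a, ha, hsat⟩ := (modelsF_embEB_iff hhead).1 h B hB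
  have hatom : a ∈ r.atoms := List.mem_append_left _ (List.mem_append_left _ ha)
  exact ⟨a, ha, hsat, Formula.isAtomic.sat_box trivial hΓ
    (fun x hx => hnamed B (sat_bodyE_iff.1 hB).2 x ⟨a, hatom, hx⟩) hsat⟩

theorem Rule.isSafe.isNamed (hr : r.isSafe) {B : ℕ → w.U}
    (hB : ∀ b ∈ r.pos, Sat Sem.any w Γ b.toFormula.box B) {x : ℕ} (hx : r.hasVar x) :
    IsNamed w (B x) := by
  obtain ⟨b, hb, hbx⟩ := hr x hx
  exact isNamed_of_sat_box (hB b hb) hbx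

theorem Rule.isNormal.head_ne_nil (hr : r.isNormal) : r.head ≠ [] :=
  List.ne_nil_of_length_eq_add_one hr

theorem hasCommonModels_tauEH_of_gHorn (hΦ : ∀ φ ∈ Φ, isGHornSentence φ) (hN : progNormal P)
    (hS : progSafe P) (hpos : progPositive P) :
    HasCommonModels Sem.any Γ (Φ ∪ tauEB P) (Φ ∪ tauEH P) := by
  intro I _ w hw hΓ
  have H := Interp.isSubproduct_pi w
  have hEB := H.modelsT_union_tauEB
    (fun φ hφ => H.liftsAlong_of_isGHornSentence Function.surjective_id (hΦ φ hφ)) hN hpos hw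
  refine ⟨Interp.pi w, modelsT_union_ruleEmb_mono hEB fun r hr => ?_, H.posDiagram_subset⟩
  exact modelsF_embEH_of_embEB (hN r hr).head_ne_nil (H.posDiagram_subset.trans hΓ)
    fun B hB x hx => (hS r hr).isNamed hB hx

theorem exists_isSubproduct_named {I : Type} (w : I → Interp S)
    (hP : (∃ r ∈ P, ∃ x, r.hasVar x) → ∃ t : Term S, t.isGround) :
    ∃ (W : Interp S) (π : ∀ i, W.U → (w i).U), IsSubproduct W w π ∧
      ∀ r ∈ P, ∀ x, r.hasVar x → ∀ u : W.U, IsNamed W u := by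
  by_cases h : ∃ t : Term S, t.isGround
  · exact ⟨_, _, Interp.isSubproduct_namedPart_pi w h,
      fun _ _ _ _ => Interp.isNamed_namedPart _ h⟩
  · exact ⟨_, _, Interp.isSubproduct_pi w, fun r hr x hx => absurd (hP ⟨r, hr, x, hx⟩) h⟩

theorem hasCommonModels_ruleEmb_of_horn (hΦ : ∀ φ ∈ Φ, isHornSentence φ) (hN : progNormal P)
    (hpos : progPositive P) (hP : (∃ r ∈ P, ∃ x, r.hasVar x) → ∃ t : Term S, t.isGround)
    {emb : Rule S → Formula S}
    (hemb : ∀ W : Interp S, W.posDiagram ⊆ Γ → ∀ r ∈ P,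
      (∀ x, r.hasVar x → ∀ u : W.U, IsNamed W u) →
      ModelsF Sem.any W Γ (embEB r) → ModelsF Sem.any W Γ (emb r)) :
    HasCommonModels Sem.any Γ (Φ ∪ tauEB P) (Φ ∪ (ruleEmb emb P ∪ UNAax P)) := by
  intro I _ w hw hΓ
  obtain ⟨W, π, H, hnamed⟩ := exists_isSubproduct_named w hP
  have hEB := H.modelsT_union_tauEB (fun φ hφ => H.liftsAlong_of_isHornSentence (hΦ φ hφ))
    hN hpos hw
  refine ⟨W, modelsT_union_ruleEmb_mono hEB fun r hr => ?_, H.posDiagram_subset⟩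
  exact hemb W (H.posDiagram_subset.trans hΓ) r hr (hnamed r hr)

theorem exists_isGround_of_goodSig (hG : goodSig P) (h : ∃ r ∈ P, ∃ x, r.hasVar x) :
    ∃ t : Term S, t.isGround := by
  obtain ⟨r, hr, x, a, ha, j, -⟩ := h
  obtain ⟨f, -, hf⟩ := hG ⟨a.p, ⟨r, hr, a, ha, rfl⟩, j.pos⟩
  have : IsEmpty (Fin (S.arF f)) := hf ▸ Fin.isEmpty
  exact ⟨Term.func f isEmptyElim, isEmptyElim⟩

theorem expEquivSel_tauEB_tauEH (hΦ : FOTheory Φ) (hN : progNormal P)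
    (h : ∀ Γ, HasCommonModels Sem.any Γ (Φ ∪ tauEB P) (Φ ∪ tauEH P)) :
    ExpEquivSel Sem.any ogaOf (Φ ∪ tauEB P) (Φ ∪ tauEH P) :=
  expEquivSel_ogaOf_of_hasCommonModels (hΦ.boxAtomic_union boxAtomic_embEB)
    (hΦ.boxAtomic_union boxAtomic_embEH)
    (fun _ _ hw => modelsT_union_ruleEmb_mono hw fun r hr =>
      modelsF_embEB_of_embEH (hN r hr).head_ne_nil) h

theorem expEquivSel_tauEB_tauHP (hΦ : FOTheory Φ)
    (h : ∀ Γ, HasCommonModels Sem.any Γ (Φ ∪ tauEB P) (Φ ∪ tauHP P)) :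
    ExpEquivSel Sem.any ogaOf (Φ ∪ tauEB P) (Φ ∪ tauHP P) :=
  expEquivSel_ogaOf_of_hasCommonModels (hΦ.boxAtomic_union boxAtomic_embEB)
    (hΦ.boxAtomic_union boxAtomic_embHP)
    (fun _ _ hw => modelsT_union_ruleEmb_mono hw fun _ _ => modelsF_embEB_of_embHP) h

end Embeddings

theorem stmt14_general {S : Sig} :
    (∀ (Φ : Set (Formula S)) (P : Program S),
        GHornTheory Φ → progNormal P → progSafe P → progPositive P →
        ExpEquivSel Sem.any ogaOf (Φ ∪ tauEB P) (Φ ∪ tauEH P)) ∧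
    (∀ (Φ : Set (Formula S)) (P : Program S),
        HornTheory Φ → progNormal P → progPositive P →
        ((∃ r ∈ P, ∃ x, r.hasVar x) → ∃ t : Term S, t.isGround) →
        ExpEquivSel Sem.any ogaOf (Φ ∪ tauHP P) (Φ ∪ tauEB P) ∧
        ExpEquivSel Sem.any ogaOf (Φ ∪ tauEB P) (Φ ∪ tauEH P) ∧
        ExpEquivSel Sem.any ogaOf (Φ ∪ tauHP P) (Φ ∪ tauEH P)) := by
  refine ⟨fun Φ P hΦ hN hS hpos => ?_, fun Φ P hΦ hN hpos hP => ?_⟩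
  · exact expEquivSel_tauEB_tauEH hΦ.1 hN fun Γ => hasCommonModels_tauEH_of_gHorn hΦ.2 hN hS hpos
  · have hHP : ExpEquivSel Sem.any ogaOf (Φ ∪ tauEB P) (Φ ∪ tauHP P) :=
      expEquivSel_tauEB_tauHP hΦ.1 fun Γ => hasCommonModels_ruleEmb_of_horn hΦ.2 hN hpos hP
        fun W hΓ r _ hnamed => modelsF_embHP_of_embEB hΓ hnamed
    have hEH : ExpEquivSel Sem.any ogaOf (Φ ∪ tauEB P) (Φ ∪ tauEH P) :=
      expEquivSel_tauEB_tauEH hΦ.1 hN fun Γ => hasCommonModels_ruleEmb_of_horn hΦ.2 hN hpos hP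
        fun W hΓ r hr hnamed => modelsF_embEH_of_embEB (hN r hr).head_ne_nil hΓ
          fun B _ x hx => hnamed x hx (B x)
    exact ⟨hHP.symm, hEH, hHP.symm.trans hEH⟩

/-- For a generalized Horn theory `Φ` and a safe positive normal
program `P`, `ι_EB(Φ,P) ≡ᴱ_oga ι_EH(Φ,P)`; for a Horn theory `Φ` and a positive
normal program `P`, `ι_HP(Φ,P) ≡ᴱ_oga ι_EB(Φ,P) ≡ᴱ_oga ι_EH(Φ,P)`. -/
theorem stmt14 {S : Sig} :
    (∀ (Φ : Set (Formula S)) (P : Program S),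
        GHornTheory Φ → progWf P → progNormal P → progSafe P → progPositive P →
        goodSig P → CoverSig Φ P →
        ExpEquivSel Sem.any ogaOf (Φ ∪ tauEB P) (Φ ∪ tauEH P)) ∧
    (∀ (Φ : Set (Formula S)) (P : Program S),
        HornTheory Φ → progWf P → progNormal P → progPositive P →
        goodSig P → CoverSig Φ P →
        ExpEquivSel Sem.any ogaOf (Φ ∪ tauHP P) (Φ ∪ tauEB P) ∧
        ExpEquivSel Sem.any ogaOf (Φ ∪ tauEB P) (Φ ∪ tauEH P) ∧
        ExpEquivSel Sem.any ogaOf (Φ ∪ tauHP P) (Φ ∪ tauEH P)) :=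
  ⟨fun Φ P hΦ _ hN hS hpos _ _ => stmt14_general.1 Φ P hΦ hN hS hpos,
    fun Φ P hΦ _ hN hpos hG _ =>
      stmt14_general.2 Φ P hΦ hN hpos (exists_isGround_of_goodSig hG)⟩
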